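/- Let P ⊆ ℤ^n_{≥0} be a polymatroid over [n] with rank function f, and let t ∈ [n] satisfy f([n]\{t}) = f([n]). For j ≥ 0, let H^t_j(P) = {H ∈ H_j(P) : t ∉ H}. Then for every j with 0 ≤ j < r_2(P)−1, H_j(P\t) = {H\{t} : H ∈ H_j(P) \ H^t_j(P)} ∪ H^t_{j+1}(P), where P\t is the deletion of t from P. -/

import Mathlib

open Finset Polynomial

/-- `f` is the rank function of a polymatroid over the ground set `[n]` (encoded as `Fin n`):
normalization, monotonicity and submodularity. -/
def IsPolymatroidRank (n : ℕ) (f : Finset (Fin n) → ℕ) : Prop :=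
  f ∅ = 0 ∧ (∀ I J : Finset (Fin n), I ⊆ J → f I ≤ f J) ∧
    ∀ I J : Finset (Fin n), f (I ∪ J) + f (I ∩ J) ≤ f I + f J

/-- The set of bases of the polymatroid `P ⊆ ℤ^n_{≥0}` with rank function `f`:
all nonnegative integer vectors `a` with `∑_{i ∈ I} a i ≤ f I` for every `I ⊆ [n]`
and `∑_{i ∈ [n]} a i = f [n]`.  (Every such vector has entries `≤ f [n]`, whence the
bounding box used to produce a `Finset`.) -/
def polyBases (n : ℕ) (f : Finset (Fin n) → ℕ) : Finset (Fin n → ℤ) :=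
  ((Finset.univ : Finset (Fin n → Fin (f Finset.univ + 1))).image
      (fun a i => ((a i : ℕ) : ℤ))).filter
    fun a => (∀ i, 0 ≤ a i) ∧ (∀ I : Finset (Fin n), ∑ i ∈ I, a i ≤ (f I : ℤ)) ∧
      ∑ i, a i = (f Finset.univ : ℤ)

/-- The externally active indices of a basis `a`: those `i` such that
`a + e_i - e_j ∉ P` for every `j < i`. -/
def extAct (n : ℕ) (f : Finset (Fin n) → ℕ) (a : Fin n → ℤ) : Finset (Fin n) :=
  Finset.univ.filter fun i => ∀ j, j < i →
    (fun t => a t + (if t = i then 1 else 0) - (if t = j then 1 else 0)) ∉ polyBases n f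

/-- The internally active indices of a basis `a`: those `i` such that
`a - e_i + e_j ∉ P` for every `j < i`. -/
def intAct (n : ℕ) (f : Finset (Fin n) → ℕ) (a : Fin n → ℤ) : Finset (Fin n) :=
  Finset.univ.filter fun i => ∀ j, j < i →
    (fun t => a t - (if t = i then 1 else 0) + (if t = j then 1 else 0)) ∉ polyBases n f

/-- The exterior polynomial `X_P(y) = ∑_{a ∈ P} y^(n - |Ext(a)|)`. -/
noncomputable def exteriorPoly (n : ℕ) (f : Finset (Fin n) → ℕ) : Polynomial ℤ :=
  ∑ a ∈ polyBases n f, X ^ (n - (extAct n f a).card)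

/-- The interior polynomial `I_P(x) = ∑_{a ∈ P} x^(n - |Int(a)|)`. -/
noncomputable def interiorPoly (n : ℕ) (f : Finset (Fin n) → ℕ) : Polynomial ℤ :=
  ∑ a ∈ polyBases n f, X ^ (n - (intAct n f a).card)

/-- `r_k(P) = min { n - |F| : F ⊆ [n], f F ≤ f [n] - k }` (junk value `0` if no such `F`). -/
noncomputable def rk (n : ℕ) (f : Finset (Fin n) → ℕ) (k : ℕ) : ℕ :=
  sInf {m | ∃ F : Finset (Fin n), (f F : ℤ) ≤ (f Finset.univ : ℤ) - k ∧ m = n - F.card}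

/-- `r'_k(P) = min { |F| : F ⊆ [n], ∑_{i ∈ F} f {i} - f F ≥ k }` (junk value `0` if no such `F`). -/
noncomputable def rk' (n : ℕ) (f : Finset (Fin n) → ℕ) (k : ℕ) : ℕ :=
  sInf {m | ∃ F : Finset (Fin n), (k : ℤ) ≤ (∑ i ∈ F, (f {i} : ℤ)) - (f F : ℤ) ∧ m = F.card}

/-- `H_j(P)`: the flats `H` (i.e. `f (H ∪ {e}) > f H` for all `e ∉ H`) with
`f H = f [n] - 1` and `n - |H| = j`. -/
def Hset (n : ℕ) (f : Finset (Fin n) → ℕ) (j : ℕ) : Finset (Finset (Fin n)) :=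
  Finset.univ.filter fun H =>
    (∀ e, e ∉ H → f H < f (insert e H)) ∧ (f H : ℤ) = (f Finset.univ : ℤ) - 1 ∧
      n - H.card = j

/-- `C_j(P)`: the sets `C` with `|C| = j`, `∑_{i ∈ C} f {i} - f C = 1` and
`∑_{i ∈ C \ {j'}} f {i} = f (C \ {j'})` for every `j' ∈ C`. -/
def Cset (n : ℕ) (f : Finset (Fin n) → ℕ) (j : ℕ) : Finset (Finset (Fin n)) :=
  Finset.univ.filter fun C => C.card = j ∧
    (∑ i ∈ C, (f {i} : ℤ)) - (f C : ℤ) = 1 ∧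
    ∀ j' ∈ C, (∑ i ∈ C.erase j', (f {i} : ℤ)) = (f (C.erase j') : ℤ)

/-- The dual rank function `f*(I) = f([n] \ I) - f([n]) + ∑_{i ∈ I} f {i}`
(the subtraction is exact for a polymatroid rank function). -/
def fdual (n : ℕ) (f : Finset (Fin n) → ℕ) : Finset (Fin n) → ℕ :=
  fun I => f (Finset.univ \ I) + (∑ i ∈ I, f {i}) - f Finset.univ

/-- `H_j(Q)` for a polymatroid `Q` over a ground set `S ⊆ [n]` with (ℤ-valued) rank
function `g`: the flats `H ⊆ S` (i.e. `g (H ∪ {e}) > g H` for all `e ∈ S \ H`) with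
`g H = g S - 1` and `|S| - |H| = j`. -/
def HjGen (n : ℕ) (S : Finset (Fin n)) (g : Finset (Fin n) → ℤ) (j : ℕ) :
    Finset (Finset (Fin n)) :=
  S.powerset.filter fun H =>
    (∀ e ∈ S \ H, g H < g (insert e H)) ∧ g H = g S - 1 ∧ S.card - H.card = j

/-
Flats of a deletion are exactly the traces `H \ {t}` of the flats `H` of `P`: traces of flats are
flats by diminishing returns, and conversely a flat `H` of `P \ t` is a flat of `P` if adding `t`
raises its rank, while otherwise `H ∪ {t}` is a flat of `P` of the same rank.  Deleting `t` does
not change the rank of the ground set, so the same dichotomy describes the hyperplanes of `P \ t`,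
except that a hyperplane `H ∋ t` of `P` counts only if removing `t` preserves its rank.  Below
`r_2(P) - 1` this always holds: `H \ {t}` is too large to have rank at most `f([n]) - 2`.
-/

section Flat

variable {α R : Type*} [DecidableEq α] {g : Finset α → R} {S T H I J : Finset α} {e t : α}

/-- Submodularity of a set function, the polymatroid axiom behind diminishing returns. -/
def IsSubmodular [Add R] [LE R] (g : Finset α → R) : Prop :=
  ∀ I J, g (I ∪ J) + g (I ∩ J) ≤ g I + g J

/-- `H` is a flat of the restriction to the ground set `S` of the polymatroid with rank function
`g`. Restrictions, and in particular deletions, keep `g` and shrink `S`. -/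
def IsFlatIn [LT R] (g : Finset α → R) (S H : Finset α) : Prop :=
  H ⊆ S ∧ ∀ e ∈ S \ H, g H < g (insert e H)

lemma IsSubmodular.apply_insert_add_le [Add R] [LE R] (hg : IsSubmodular g) (hIJ : I ⊆ J)
    (he : e ∉ J) : g (insert e J) + g I ≤ g J + g (insert e I) := by
  have hunion : J ∪ insert e I = insert e J := by rw [union_insert, union_eq_left.2 hIJ]
  have hinter : J ∩ insert e I = I := by rw [inter_insert_of_notMem he, inter_eq_right.2 hIJ]
  simpa only [hunion, hinter] using hg J (insert e I)

lemma IsFlatIn.inter [AddCommMonoid R] [PartialOrder R] [IsOrderedCancelAddMonoid R]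
    (hg : IsSubmodular g) (hH : IsFlatIn g S H) (hTS : T ⊆ S) : IsFlatIn g T (H ∩ T) := by
  refine ⟨inter_subset_right, fun e he => ?_⟩
  obtain ⟨heT, heHT⟩ := mem_sdiff.1 he
  have heH : e ∉ H := fun h => heHT (mem_inter.2 ⟨h, heT⟩)
  have hgain : g H < g (insert e H) := hH.2 e (mem_sdiff.2 ⟨hTS heT, heH⟩)
  refine lt_of_add_lt_add_left (a := g H) ?_
  calc
    g H + g (H ∩ T) < g (insert e H) + g (H ∩ T) := add_lt_add_left hgain _
    _ ≤ g H + g (insert e (H ∩ T)) := hg.apply_insert_add_le inter_subset_left heH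

lemma IsFlatIn.of_erase [LT R] (hH : IsFlatIn g (S.erase t) H) (hlt : g H < g (insert t H)) :
    IsFlatIn g S H := by
  refine ⟨hH.1.trans (erase_subset t S), fun e he => ?_⟩
  obtain ⟨heS, heH⟩ := mem_sdiff.1 he
  obtain rfl | het := eq_or_ne e t
  · exact hlt
  · exact hH.2 e (mem_sdiff.2 ⟨mem_erase.2 ⟨het, heS⟩, heH⟩)

lemma IsFlatIn.insert_of_apply_eq [Preorder R] (hg : Monotone g) (ht : t ∈ S)
    (hH : IsFlatIn g (S.erase t) H) (heq : g (insert t H) = g H) : IsFlatIn g S (insert t H) := by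
  refine ⟨insert_subset ht (hH.1.trans (erase_subset t S)), fun e he => ?_⟩
  obtain ⟨heS, heH⟩ := mem_sdiff.1 he
  obtain ⟨het, heH⟩ := not_or.1 (mem_insert.not.1 heH)
  calc
    g (insert t H) = g H := heq
    _ < g (insert e H) := hH.2 e (mem_sdiff.2 ⟨mem_erase.2 ⟨het, heS⟩, heH⟩)
    _ ≤ g (insert e (insert t H)) := hg (insert_subset_insert e (subset_insert t H))

lemma isFlatIn_erase_iff [AddCommMonoid R] [PartialOrder R] [IsOrderedCancelAddMonoid R]
    (hmono : Monotone g) (hsub : IsSubmodular g) (ht : t ∈ S) :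
    IsFlatIn g (S.erase t) H ↔
      t ∉ H ∧ (IsFlatIn g S H ∨ g (insert t H) = g H ∧ IsFlatIn g S (insert t H)) := by
  constructor
  · intro hH
    refine ⟨fun h => notMem_erase t S (hH.1 h), ?_⟩
    obtain hlt | heq := (hmono (subset_insert t H)).lt_or_eq
    · exact .inl (hH.of_erase hlt)
    · exact .inr ⟨heq.symm, hH.insert_of_apply_eq hmono ht heq.symm⟩
  · rintro ⟨htH, hH | ⟨-, hH⟩⟩
    · have htrace : H ∩ S.erase t = H := by
        rw [inter_erase, inter_eq_left.2 hH.1, erase_eq_of_notMem htH]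
      exact htrace ▸ hH.inter hsub (erase_subset t S)
    · have htrace : insert t H ∩ S.erase t = H := by
        rw [inter_erase, inter_eq_left.2 hH.1, erase_insert htH]
      exact htrace ▸ hH.inter hsub (erase_subset t S)

end Flat

section Hyperplane

variable {α : Type*} [DecidableEq α] {g : Finset α → ℤ} {S H : Finset α} {t : α} {j : ℕ}

/-- `H` is a flat of rank one less than the ground set `S`; for matroids, a hyperplane. -/
def IsHyperplaneIn (g : Finset α → ℤ) (S H : Finset α) : Prop :=
  IsFlatIn g S H ∧ g H = g S - 1

instance decidableIsHyperplaneIn : DecidablePred (IsHyperplaneIn g S) := fun H =>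
  inferInstanceAs <|
    Decidable ((H ⊆ S ∧ ∀ e ∈ S \ H, g H < g (insert e H)) ∧ g H = g S - 1)

/-- The family `H_j` of the restriction to `S`, over an arbitrary type of elements. -/
def hyperplanes (g : Finset α → ℤ) (S : Finset α) (j : ℕ) : Finset (Finset α) :=
  {H ∈ S.powerset | IsHyperplaneIn g S H ∧ #(S \ H) = j}

lemma mem_hyperplanes : H ∈ hyperplanes g S j ↔ IsHyperplaneIn g S H ∧ #(S \ H) = j := by
  rw [hyperplanes, mem_filter, mem_powerset, and_iff_right_of_imp fun h => h.1.1.1]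

lemma isHyperplaneIn_erase_iff (hmono : Monotone g) (hsub : IsSubmodular g) (ht : t ∈ S)
    (hrank : g (S.erase t) = g S) :
    IsHyperplaneIn g (S.erase t) H ↔
      t ∉ H ∧ (IsHyperplaneIn g S H ∨ g (insert t H) = g H ∧ IsHyperplaneIn g S (insert t H)) := by
  simp only [IsHyperplaneIn, isFlatIn_erase_iff hmono hsub ht, hrank]
  grind

lemma IsHyperplaneIn.apply_insert_eq (hmono : Monotone g) (hH : IsHyperplaneIn g S (insert t H))
    (hgap : g S - 2 < g H) : g (insert t H) = g H := by
  have hle : g H ≤ g (insert t H) := hmono (subset_insert t H)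
  have hrank : g (insert t H) = g S - 1 := hH.2
  omega

/- `hj` is `j < r_2 - 1` with the convention `min ∅ = ∞`, whereas `rk` is `0` in that case. -/
theorem stmt11_general (hmono : Monotone g) (hsub : IsSubmodular g) (ht : t ∈ S)
    (hrank : g (S.erase t) = g S) (hj : ∀ F ⊆ S, g F ≤ g S - 2 → j + 1 < #(S \ F)) :
    hyperplanes g (S.erase t) j =
      (hyperplanes g S j).memberSubfamily t ∪ (hyperplanes g S (j + 1)).nonMemberSubfamily t := by
  ext H
  simp only [mem_union, mem_memberSubfamily, mem_nonMemberSubfamily, mem_hyperplanes,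
    isHyperplaneIn_erase_iff hmono hsub ht hrank]
  by_cases htH : t ∈ H
  · simp only [htH, not_true_eq_false, false_and, and_false, or_self]
  have hcard : #(S \ H) = #(S \ insert t H) + 1 := by
    rw [sdiff_insert, card_erase_add_one (mem_sdiff.2 ⟨ht, htH⟩)]
  have hcard_erase : #(S.erase t \ H) = #(S \ insert t H) := by
    rw [erase_sdiff_comm, sdiff_insert]
  have hinsert (hH : IsHyperplaneIn g S (insert t H)) (hHj : #(S \ insert t H) = j) :
      g (insert t H) = g H := by
    refine hH.apply_insert_eq hmono (not_le.1 fun hle => ?_)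
    have hlarge : j + 1 < #(S \ H) := hj H ((subset_insert t H).trans hH.1.1) hle
    omega
  rw [hcard_erase, hcard, Nat.add_right_cancel_iff]
  tauto

end Hyperplane

section RankFunction

variable {n : ℕ} {f : Finset (Fin n) → ℕ}

lemma IsPolymatroidRank.monotone_cast (hf : IsPolymatroidRank n f) :
    Monotone fun I => (f I : ℤ) :=
  fun I J hIJ => Int.ofNat_le.2 (hf.2.1 I J hIJ)

lemma IsPolymatroidRank.isSubmodular_cast (hf : IsPolymatroidRank n f) :
    IsSubmodular fun I => (f I : ℤ) :=
  fun I J => Int.ofNat_le.2 (hf.2.2 I J)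

lemma rk_le_card_univ_sdiff {k : ℕ} {F : Finset (Fin n)} (hF : (f F : ℤ) ≤ f univ - k) :
    rk n f k ≤ #(univ \ F) :=
  Nat.sInf_le ⟨F, hF, by rw [card_univ_sdiff, Fintype.card_fin]⟩

lemma HjGen_eq_hyperplanes (S : Finset (Fin n)) (g : Finset (Fin n) → ℤ) (j : ℕ) :
    HjGen n S g j = hyperplanes g S j := by
  ext H
  rw [HjGen, mem_filter, mem_powerset, mem_hyperplanes, IsHyperplaneIn, IsFlatIn, and_assoc,
    and_assoc]
  refine and_congr_right fun hHS => ?_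
  rw [card_sdiff_of_subset hHS]

end RankFunction

/-- Let `t ∈ [n]` with `f([n]\{t}) = f([n])`.  For every
`0 ≤ j < r_2(P) - 1`, `H_j(P\t) = {H \ {t} : H ∈ H_j(P) \ H^t_j(P)} ∪ H^t_{j+1}(P)`,
where the deletion `P\t` is the polymatroid over `[n]\{t}` with rank function `f`
restricted, and `H^t_j(P) = {H ∈ H_j(P) : t ∉ H}`. -/
theorem stmt11 (n : ℕ) (f : Finset (Fin n) → ℕ) (hf : IsPolymatroidRank n f)
    (t : Fin n) (ht : f (Finset.univ.erase t) = f Finset.univ) (j : ℕ)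
    (hj : j < rk n f 2 - 1) :
    HjGen n (Finset.univ.erase t) (fun I => (f I : ℤ)) j =
      ((HjGen n Finset.univ (fun I => (f I : ℤ)) j \
          ((HjGen n Finset.univ (fun I => (f I : ℤ)) j).filter fun H => t ∉ H)).image
        fun H => H.erase t) ∪
      ((HjGen n Finset.univ (fun I => (f I : ℤ)) (j + 1)).filter fun H => t ∉ H) := by
  simp only [← filter_not, not_not, HjGen_eq_hyperplanes]
  exact stmt11_general hf.monotone_cast hf.isSubmodular_cast (mem_univ t) (congrArg Nat.cast ht)
    fun F _ hF => (Nat.add_lt_of_lt_sub hj).trans_le (rk_le_card_univ_sdiff hF)
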